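/- arXiv:1011.5160 — 2 statements merged into one kernel-verified Lean document; each statement's English description precedes it below -/
import Mathlib

section
/- Let v ∈ E be a unit vector and η ∈ E arbitrary. Define p(t) = 2 sinh(t/2) and q(t) = 2 sinh(t/2)(cosh(t/2) − 1). Then ζ(t) = p(t) η + ⟨η,v⟩ q(t) v satisfies the Jacobi equation 4ζ''(t) − ζ(t) − 3⟨ζ(t),v⟩v = 0 for all t ∈ ℝ, with initial conditions ζ(0) = 0 and ζ'(0) = η. -/
/- Context: `E` is a real inner product space with a fixed unit vector `v`
(representing `Jγ̇` in a parallel orthonormal frame along a unit-speed geodesic `γ`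
of `ℂH^n` of constant holomorphic sectional curvature `−1`). A smooth curve
`ζ : ℝ → E` satisfies the Jacobi equation of `ℂH^n` if
`4ζ'' − ζ − 3⟨ζ,v⟩v = 0`. -/

open scoped RealInnerProductSpace
open Real

/-! On normal vectors, the Jacobi operator along the geodesic has eigenvalue `-1` on the line `ℝ v`
and `-1/4` on its orthogonal complement. A Jacobi field starting at zero with velocity in the
eigenspace of `-a²` is the multiple `sinh (a t) / a` of that velocity, so splitting
`η = (η - ⟪η, v⟫ v) + ⟪η, v⟫ v` gives `ζ t = 2 sinh (t / 2) (η - ⟪η, v⟫ v) + sinh t ⟪η, v⟫ v`. The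
half-angle formula `sinh t = 2 sinh (t / 2) cosh (t / 2)` says that `p + q = sinh`, which turns this
into `p η + ⟪η, v⟫ q v`. -/

section ConstantCoefficients

variable {F : Type*} [NormedAddCommGroup F] [NormedSpace ℝ F]

/-- A solution `ζ` of the Jacobi equation `ζ'' + R ζ = 0` in a parallel frame, for a Jacobi operator
`R` that is constant along the geodesic. The velocity `ζ'` is part of the data, so that both
derivatives are asserted to exist. -/
structure IsJacobiField (R : F →ₗ[ℝ] F) (ζ ζ' : ℝ → F) : Prop where
  hasDerivAt (t : ℝ) : HasDerivAt ζ (ζ' t) t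
  hasDerivAt_velocity (t : ℝ) : HasDerivAt ζ' (-R (ζ t)) t

namespace IsJacobiField

variable {R : F →ₗ[ℝ] F} {ζ ζ' ξ ξ' : ℝ → F}

theorem deriv_eq (h : IsJacobiField R ζ ζ') : deriv ζ = ζ' :=
  funext fun t => (h.hasDerivAt t).deriv

theorem deriv_deriv (h : IsJacobiField R ζ ζ') (t : ℝ) : deriv (deriv ζ) t = -R (ζ t) := by
  rw [h.deriv_eq, (h.hasDerivAt_velocity t).deriv]

protected theorem add (hζ : IsJacobiField R ζ ζ') (hξ : IsJacobiField R ξ ξ') :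
    IsJacobiField R (fun t => ζ t + ξ t) (fun t => ζ' t + ξ' t) where
  hasDerivAt t := (hζ.hasDerivAt t).add (hξ.hasDerivAt t)
  hasDerivAt_velocity t := by
    rw [map_add, neg_add]
    exact (hζ.hasDerivAt_velocity t).add (hξ.hasDerivAt_velocity t)

theorem of_mem_eigenspace {a : ℝ} {x : F} (ha : a ≠ 0)
    (hx : x ∈ Module.End.eigenspace R (-a ^ 2)) :
    IsJacobiField R (fun t => (sinh (a * t) / a) • x) (fun t => cosh (a * t) • x) where
  hasDerivAt t := by
    have hsinh : HasDerivAt (fun s => sinh (a * s) / a) (cosh (a * t) * a / a) t :=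
      (hasDerivAt_const_mul a).sinh.div_const a
    rw [mul_div_cancel_right₀ _ ha] at hsinh
    exact hsinh.smul_const x
  hasDerivAt_velocity t := by
    have hcosh : HasDerivAt (fun s => cosh (a * s)) (sinh (a * t) * a) t :=
      (hasDerivAt_const_mul a).cosh
    have hR : -R ((sinh (a * t) / a) • x) = (sinh (a * t) * a) • x := by
      rw [map_smul, Module.End.mem_eigenspace_iff.mp hx, smul_smul, ← neg_smul]
      congr 1
      field_simp
    rw [hR]
    exact hcosh.smul_const x

end IsJacobiField

end ConstantCoefficients

section ComplexHyperbolic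

variable {E : Type*} [NormedAddCommGroup E] [InnerProductSpace ℝ E] {v : E}

/-- The Jacobi operator `x ↦ R(x, γ̇)γ̇` of complex hyperbolic space of holomorphic sectional
curvature `-1` on vectors normal to the geodesic `γ`, where `v` stands for `Jγ̇`. -/
noncomputable def jacobiOperator (v : E) : E →ₗ[ℝ] E :=
  (-(1 / 4) : ℝ) • (LinearMap.id + (3 : ℝ) • (innerₗ E v).smulRight v)

theorem jacobiOperator_apply (v x : E) :
    jacobiOperator v x = (-(1 / 4) : ℝ) • (x + (3 : ℝ) • ⟪x, v⟫ • v) := by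
  simp [jacobiOperator, real_inner_comm]

theorem self_mem_eigenspace_jacobiOperator (hv : ‖v‖ = 1) :
    v ∈ Module.End.eigenspace (jacobiOperator v) (-1) := by
  rw [Module.End.mem_eigenspace_iff, jacobiOperator_apply, real_inner_self_eq_norm_sq, hv]
  module

theorem mem_eigenspace_jacobiOperator_of_inner_eq_zero {x : E} (hx : ⟪x, v⟫ = 0) :
    x ∈ Module.End.eigenspace (jacobiOperator v) (-(1 / 4)) := by
  rw [Module.End.mem_eigenspace_iff, jacobiOperator_apply, hx, zero_smul, smul_zero, add_zero]

theorem inner_sub_inner_smul_self_eq_zero (hv : ‖v‖ = 1) (x : E) : ⟪x - ⟪x, v⟫ • v, v⟫ = 0 := by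
  rw [inner_sub_left, real_inner_smul_left, real_inner_self_eq_norm_sq, hv, one_pow, mul_one,
    sub_self]

theorem isJacobiField_jacobiOperator (hv : ‖v‖ = 1) (η : E) :
    IsJacobiField (jacobiOperator v)
      (fun t => (2 * sinh (t / 2)) • (η - ⟪η, v⟫ • v) + sinh t • ⟪η, v⟫ • v)
      (fun t => cosh (t / 2) • (η - ⟪η, v⟫ • v) + cosh t • ⟪η, v⟫ • v) := by
  have horth : η - ⟪η, v⟫ • v ∈ Module.End.eigenspace (jacobiOperator v) (-(1 / 2) ^ 2) := by
    convert mem_eigenspace_jacobiOperator_of_inner_eq_zero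
      (inner_sub_inner_smul_self_eq_zero hv η) using 2
    norm_num
  have hpar : ⟪η, v⟫ • v ∈ Module.End.eigenspace (jacobiOperator v) (-1 ^ 2) := by
    rw [one_pow]
    exact Submodule.smul_mem _ _ (self_mem_eigenspace_jacobiOperator hv)
  convert (IsJacobiField.of_mem_eigenspace (by norm_num) horth).add
    (IsJacobiField.of_mem_eigenspace one_ne_zero hpar) using 5 <;> ring_nf

end ComplexHyperbolic

/-- for a unit vector `v ∈ E` and arbitrary `η ∈ E`, with
`p(t) = 2 sinh(t/2)` and `q(t) = 2 sinh(t/2)(cosh(t/2) − 1)`, the curve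
`ζ(t) = p(t) η + ⟨η,v⟩ q(t) v` satisfies the Jacobi equation
`4ζ''(t) − ζ(t) − 3⟨ζ(t),v⟩v = 0` for all `t ∈ ℝ`, with initial conditions
`ζ(0) = 0` and `ζ'(0) = η`. -/
theorem jacobi_field_normal (E : Type*) [NormedAddCommGroup E]
    [InnerProductSpace ℝ E] (v : E) (hv : ‖v‖ = 1) (η : E)
    (p q : ℝ → ℝ) (ζ : ℝ → E)
    (hp : ∀ t, p t = 2 * sinh (t / 2))
    (hq : ∀ t, q t = 2 * sinh (t / 2) * (cosh (t / 2) - 1))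
    (hζ : ∀ t, ζ t = p t • η + (⟪η, v⟫ * q t) • v) :
    (∀ t : ℝ, (4 : ℝ) • deriv (deriv ζ) t - ζ t - (3 : ℝ) • ⟪ζ t, v⟫ • v = 0) ∧
    ζ 0 = 0 ∧ deriv ζ 0 = η := by
  have hsplit : ζ = fun t =>
      (2 * sinh (t / 2)) • (η - ⟪η, v⟫ • v) + sinh t • ⟪η, v⟫ • v := by
    funext t
    have hhalf : sinh t = 2 * sinh (t / 2) * cosh (t / 2) := by
      rw [← sinh_two_mul, mul_div_cancel₀ t two_ne_zero]
    rw [hζ, hp, hq, hhalf]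
    module
  have hJ := isJacobiField_jacobiOperator hv η
  rw [← hsplit] at hJ
  refine ⟨fun t => ?_, ?_, ?_⟩
  · rw [hJ.deriv_deriv, jacobiOperator_apply]
    module
  · simp [hsplit]
  · simp [hJ.deriv_eq]
end

section
/- For all t ∈ ℝ and all φ ∈ [0,π/2], det M(t,φ) = 2 cosh(t/2)³ sinh(t/2). In particular det M(t,φ) is independent of φ, and M(t,φ) is invertible for every t > 0. -/
/- Context: `M(t,φ)` is the 3×3 block, corresponding to the vectors `Z, P̄ξ, F̄ξ`,
of the endomorphism `D(t)` built from Jacobi fields along a geodesic normal to the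
submanifold `W_w` in `ℂH^n`, for a unit normal `ξ` of Kähler angle `φ`; its columns
are listed in the paper. -/

open Real

noncomputable section

/-- The 3×3 block `M(t,φ)` (in the basis `Z, P̄ξ, F̄ξ`) of the endomorphism `D(t)`
built from Jacobi fields along a geodesic normal to `W_w` in `ℂH^n`, for a unit
normal `ξ` of Kähler angle `φ`; the columns are the Jacobi fields `ζ_Z`,
`ζ_{P̄ξ}`, `ζ_{F̄ξ}`. -/
def M (t φ : ℝ) : Matrix (Fin 3) (Fin 3) ℝ :=
  Matrix.of
    ![![cosh (t / 2),
        -(sin φ * sinh (t / 2)),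
        0],
      ![-(sin φ * (cos φ ^ 2 + sin φ ^ 2 * cosh (t / 2)) * sinh (t / 2)),
        cos φ ^ 2 * cosh (t / 2) + sin φ ^ 2 * cosh t,
        2 * sin φ * cos φ * (cosh (t / 2) - 1) * sinh (t / 2)],
      ![-(cos φ * sin φ ^ 2 * (cosh (t / 2) - 1) * sinh (t / 2)),
        -(sin φ * cos φ * (cosh (t / 2) - cosh t)),
        2 * (1 + cos φ ^ 2 * (cosh (t / 2) - 1)) * sinh (t / 2)]]

/-- The entrywise derivative `M'(r,φ)` of `M` with respect to the first variable. -/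
def M' (r φ : ℝ) : Matrix (Fin 3) (Fin 3) ℝ :=
  Matrix.of fun i j => deriv (fun t => M t φ i j) r

/-! Orthogonally to `ξ`, the Jacobi operator `R(·, ξ)ξ` of `ℂH^n` has eigenvalue `-1` on `Jξ` and
`-1/4` on the complement of `ℂξ`. The components of a Jacobi field in a parallel eigenframe
therefore solve the scalar equations `y'' = y / 4` and `y'' = y`, so the field is determined by its
initial value and velocity. This writes `M(t,φ)` as a rotation by `φ` times a matrix of scalar
solutions, and only the determinant of the latter has to be computed. -/

theorem cosh_eq_half (t : ℝ) : cosh t = cosh (t / 2) ^ 2 + sinh (t / 2) ^ 2 := by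
  rw [← cosh_two_mul, mul_div_cancel₀ t two_ne_zero]

theorem sinh_eq_half (t : ℝ) : sinh t = 2 * sinh (t / 2) * cosh (t / 2) := by
  rw [← sinh_two_mul, mul_div_cancel₀ t two_ne_zero]

/-- The eigenframe `Z`, `cos φ P̄ξ - sin φ F̄ξ`, `Jξ = sin φ P̄ξ + cos φ F̄ξ` of the Jacobi operator
of `ξ`, as columns in the basis `Z, P̄ξ, F̄ξ`. -/
def jacobiFrame (φ : ℝ) : Matrix (Fin 3) (Fin 3) ℝ :=
  !![1, 0, 0;
     0, cos φ, sin φ;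
     0, -sin φ, cos φ]

/-- The initial values of the Jacobi fields `ζ_Z`, `ζ_{P̄ξ}`, `ζ_{F̄ξ}`, as columns in the basis
`Z, P̄ξ, F̄ξ`: the projection onto the tangent space of `W_w`. -/
def jacobiInitialValue : Matrix (Fin 3) (Fin 3) ℝ :=
  Matrix.diagonal ![1, 1, 0]

/-- The initial velocities of the Jacobi fields `ζ_Z`, `ζ_{P̄ξ}`, `ζ_{F̄ξ}`, as columns in the basis
`Z, P̄ξ, F̄ξ`: minus the shape operator of `W_w` on tangent vectors, the identity on normal ones. -/
def jacobiInitialVelocity (φ : ℝ) : Matrix (Fin 3) (Fin 3) ℝ :=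
  !![0, -(sin φ / 2), 0;
     -(sin φ / 2), 0, 0;
     0, 0, 1]

open scoped Matrix in
/-- The components of `ζ_Z`, `ζ_{P̄ξ}`, `ζ_{F̄ξ}` at time `t`, as columns in `jacobiFrame φ`. The
diagonal matrices hold the solutions of `y'' = y / 4` (twice) and `y'' = y` with `(y(0), y'(0))`
equal to `(1, 0)` and to `(0, 1)`; the transpose of the orthogonal matrix `jacobiFrame φ` passes to
components in the frame. -/
def jacobiComponents (t φ : ℝ) : Matrix (Fin 3) (Fin 3) ℝ :=
  Matrix.diagonal ![cosh (t / 2), cosh (t / 2), cosh t] *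
      ((jacobiFrame φ)ᵀ * jacobiInitialValue) +
    Matrix.diagonal ![2 * sinh (t / 2), 2 * sinh (t / 2), sinh t] *
      ((jacobiFrame φ)ᵀ * jacobiInitialVelocity φ)

theorem det_jacobiFrame (φ : ℝ) : (jacobiFrame φ).det = 1 := by
  simp [jacobiFrame, Matrix.det_fin_three, ← sq]

open scoped Matrix in
theorem transpose_jacobiFrame (φ : ℝ) : (jacobiFrame φ)ᵀ = jacobiFrame (-φ) := by
  simp [jacobiFrame, ← Matrix.ext_iff, Fin.forall_fin_succ]

theorem jacobiComponents_eq (t φ : ℝ) :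
    jacobiComponents t φ =
      !![cosh (t / 2), -(sin φ * sinh (t / 2)), 0;
         -(sin φ * cos φ * sinh (t / 2)), cos φ * cosh (t / 2), -(2 * sin φ * sinh (t / 2));
         -(sin φ ^ 2 * sinh (t / 2) * cosh (t / 2)), sin φ * cosh t, cos φ * sinh t] := by
  rw [jacobiComponents, transpose_jacobiFrame, jacobiFrame, jacobiInitialValue,
    jacobiInitialVelocity, cos_neg, sin_neg, sinh_eq_half t]
  simp only [Matrix.diagonal_vec3, Matrix.mul_fin_three, Matrix.of_add_of, Matrix.add_cons,
    Matrix.head_cons, Matrix.tail_cons, Matrix.empty_add_empty, EmbeddingLike.apply_eq_iff_eq,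
    Matrix.vecCons_inj, and_true]
  grind

theorem M_eq_jacobiFrame_mul_jacobiComponents (t φ : ℝ) :
    M t φ = jacobiFrame φ * jacobiComponents t φ := by
  have cos_sq_eq : cos φ ^ 2 = 1 - sin φ ^ 2 := cos_sq' φ
  rw [M, jacobiComponents_eq, jacobiFrame, Matrix.mul_fin_three, sinh_eq_half t]
  simp only [EmbeddingLike.apply_eq_iff_eq, Matrix.vecCons_inj, and_true]
  grind

theorem det_jacobiComponents (t φ : ℝ) :
    (jacobiComponents t φ).det = 2 * cosh (t / 2) ^ 3 * sinh (t / 2) := by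
  rw [jacobiComponents_eq, Matrix.det_fin_three]
  simp only [Matrix.of_apply, Matrix.cons_val, cosh_eq_half t, sinh_eq_half t]
  linear_combination
    2 * sinh (t / 2) * cosh (t / 2) * (cosh (t / 2) ^ 2 - sin φ ^ 2 * sinh (t / 2) ^ 2) *
      sin_sq_add_cos_sq φ

theorem det_M_general (t φ : ℝ) :
    (M t φ).det = 2 * cosh (t / 2) ^ 3 * sinh (t / 2) ∧
    (IsUnit (M t φ) ↔ t ≠ 0) := by
  have det_eq : (M t φ).det = 2 * cosh (t / 2) ^ 3 * sinh (t / 2) := by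
    rw [M_eq_jacobiFrame_mul_jacobiComponents, Matrix.det_mul, det_jacobiFrame, one_mul,
      det_jacobiComponents]
  refine ⟨det_eq, ?_⟩
  rw [Matrix.isUnit_iff_isUnit_det, det_eq, isUnit_iff_ne_zero]
  simp [(cosh_pos (t / 2)).ne']

/-- for all `t ∈ ℝ` and all `φ ∈ [0,π/2]`,
`det M(t,φ) = 2 cosh(t/2)³ sinh(t/2)`. In particular `det M(t,φ)` is independent
of `φ`, and `M(t,φ)` is invertible for every `t > 0`. -/
theorem det_M (t φ : ℝ) (hφ : φ ∈ Set.Icc 0 (π / 2)) :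
    (M t φ).det = 2 * cosh (t / 2) ^ 3 * sinh (t / 2) ∧
    (0 < t → IsUnit (M t φ)) :=
  ⟨(det_M_general t φ).1, fun ht => (det_M_general t φ).2.2 ht.ne'⟩
end
end
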